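/- (Theorem 4, constant regret.) Along any solution of the high-order-tuner error model, the regret R(T) = ∫_0^T e(τ)ᵀ Q e(τ) dτ satisfies R(T) ≤ 2V(0) for every T > 0, where V(t) = (1/γ)Tr[(Ξ(t)−Θ)ᵀ Λ (Ξ(t)−Θ)] + (1/γ)Tr[(Θ̂(t)−Ξ(t))ᵀ Λ (Θ̂(t)−Ξ(t))] + e(t)ᵀ P e(t); in particular the regret is bounded independently of T. -/

import Mathlib

open Matrix MeasureTheory Filter

/-!
Write `X = Ξ - Θ`, `D = Θ̂ - Ξ`, `w = BᵀPe`. Differentiating `V` along a solution and using the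
Lyapunov equation, the terms in `X` cancel and
`V' = -eᵀQe + 4 (DΦ)ᵀΛw - (2β/γ)(1 + μ ΦᵀΦ) Tr(DᵀΛD)`.
If `Q ≥ κ I`, Young's inequality splits the cross term `4 eᵀPBΛDΦ` into `eᵀQe / 2` and a multiple of
`|PBΛDΦ|² ≤ ‖PB‖_F² ‖Λ‖ Tr(DᵀΛD) ΦᵀΦ`, and the lower bound on `μ` says exactly that the last term of
`V'` absorbs the latter. Hence `V' ≤ -eᵀQe / 2`, which is integrated over `[0, T]` using `V(T) ≥ 0`.
-/

section QuadraticForms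

variable {k l : Type*} [Fintype k]

lemma posSemidef_transpose_mul_mul_same [Finite l] {S : Matrix k k ℝ} (hS : S.PosSemidef)
    (D : Matrix k l ℝ) : (Dᵀ * S * D).PosSemidef := by
  simpa using hS.conjTranspose_mul_mul_same D

lemma dotProduct_mulVec_comm_of_isSymm {S : Matrix k k ℝ} (hS : S.IsSymm) (x y : k → ℝ) :
    x ⬝ᵥ S *ᵥ y = y ⬝ᵥ S *ᵥ x := by
  rw [← dotProduct_transpose_mulVec, hS.eq]

lemma dotProduct_mulVec_self_nonneg {S : Matrix k k ℝ} (hS : S.PosSemidef) (x : k → ℝ) :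
    0 ≤ x ⬝ᵥ S *ᵥ x := by
  simpa using hS.dotProduct_mulVec_nonneg x

variable [Fintype l]

lemma dotProduct_transpose_mul_mul_mulVec (S : Matrix k k ℝ) (D : Matrix k l ℝ) (v : l → ℝ) :
    v ⬝ᵥ (Dᵀ * S * D) *ᵥ v = D *ᵥ v ⬝ᵥ S *ᵥ (D *ᵥ v) := by
  rw [Matrix.mul_assoc, ← mulVec_mulVec, dotProduct_mulVec, vecMul_transpose, mulVec_mulVec]

lemma trace_transpose_mul_mul_eq_sum_col (S : Matrix k k ℝ) (X Y : Matrix k l ℝ) :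
    (Xᵀ * S * Y).trace = ∑ j, X.col j ⬝ᵥ S *ᵥ Y.col j := by
  rw [Matrix.mul_assoc]
  rfl

lemma trace_transpose_mul_mul_vecMulVec (S : Matrix k k ℝ) (X : Matrix k l ℝ) (w : k → ℝ)
    (v : l → ℝ) : (Xᵀ * S * vecMulVec w v).trace = X *ᵥ v ⬝ᵥ S *ᵥ w := by
  rw [mul_vecMulVec, trace_vecMulVec, ← mulVec_mulVec, dotProduct_comm,
    dotProduct_transpose_mulVec, dotProduct_comm]

lemma dotProduct_mulVec_self_le_trace_mul {S : Matrix k k ℝ} (hS : S.PosSemidef) (v : k → ℝ) :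
    v ⬝ᵥ S *ᵥ v ≤ S.trace * (v ⬝ᵥ v) := by
  classical
  -- The quadratic form at `v j • eᵢ - v i • eⱼ` is nonnegative; sum this over all `i` and `j`.
  have minor_nonneg (i j : k) :
      2 * (v i * (S i j * v j)) ≤ S i i * (v j * v j) + S j j * (v i * v i) := by
    have hsymm : S j i = S i j := (isHermitian_iff_isSymm.mp hS.isHermitian).apply i j
    have h := dotProduct_mulVec_self_nonneg hS (v j • Pi.single i 1 - v i • Pi.single j 1)
    simp only [mulVec_sub, mulVec_smul, mulVec_single_one, sub_dotProduct, dotProduct_sub,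
      smul_dotProduct, dotProduct_smul, single_one_dotProduct, col_apply, smul_eq_mul, hsymm] at h
    linarith
  have hsum := Finset.sum_le_sum fun i (_ : i ∈ Finset.univ) =>
    Finset.sum_le_sum fun j (_ : j ∈ Finset.univ) => minor_nonneg i j
  simp only [Finset.sum_add_distrib, ← Finset.mul_sum, ← Finset.sum_mul] at hsum
  simp only [dotProduct, mulVec, trace, diag_apply]
  linarith

lemma mulVec_dotProduct_mulVec_le_trace_mul {S : Matrix k k ℝ} (hS : S.PosSemidef)
    (D : Matrix k l ℝ) (v : l → ℝ) :
    D *ᵥ v ⬝ᵥ S *ᵥ (D *ᵥ v) ≤ (Dᵀ * S * D).trace * (v ⬝ᵥ v) := by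
  rw [← dotProduct_transpose_mul_mul_mulVec]
  exact dotProduct_mulVec_self_le_trace_mul (posSemidef_transpose_mul_mul_same hS D) v

lemma mulVec_dotProduct_self_le_sum_sq_mul (M : Matrix k l ℝ) (v : l → ℝ) :
    M *ᵥ v ⬝ᵥ M *ᵥ v ≤ (∑ i, ∑ j, M i j ^ 2) * (v ⬝ᵥ v) := by
  classical
  have htrace : (Mᵀ * (1 : Matrix k k ℝ) * M).trace = ∑ i, ∑ j, M i j ^ 2 := by
    rw [Finset.sum_comm]
    simp [trace, Matrix.mul_apply, pow_two]
  have h := mulVec_dotProduct_mulVec_le_trace_mul PosSemidef.one M v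
  rwa [htrace, one_mulVec] at h

open scoped Matrix.Norms.L2Operator in
lemma mulVec_dotProduct_self_le_sq_opNorm_mul [DecidableEq l] (M : Matrix k l ℝ) (v : l → ℝ) :
    M *ᵥ v ⬝ᵥ M *ᵥ v ≤ ‖M‖ ^ 2 * (v ⬝ᵥ v) := by
  have h := pow_le_pow_left₀ (norm_nonneg _) (l2_opNorm_mulVec M (WithLp.toLp 2 v)) 2
  simpa [mul_pow, EuclideanSpace.real_norm_sq_eq, dotProduct, ← pow_two] using h

open scoped MatrixOrder Matrix.Norms.L2Operator in
lemma mulVec_dotProduct_self_le_opNorm_mul [DecidableEq k] {S : Matrix k k ℝ}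
    (hS : S.PosSemidef) (y : k → ℝ) :
    S *ᵥ y ⬝ᵥ S *ᵥ y ≤ ‖toEuclideanCLM (𝕜 := ℝ) S‖ * (y ⬝ᵥ S *ᵥ y) := by
  -- With `S = RᵀR`, this is `|Rᵀ(Ry)|² ≤ ‖Rᵀ‖² |Ry|²`.
  obtain ⟨R, rfl⟩ : ∃ R : Matrix k k ℝ, S = Rᴴ * R :=
    CStarAlgebra.nonneg_iff_eq_star_mul_self.mp hS.nonneg
  have hnorm : ‖toEuclideanCLM (𝕜 := ℝ) (Rᴴ * R)‖ = ‖Rᴴ‖ ^ 2 := by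
    rw [l2_opNorm_toEuclideanCLM, l2_opNorm_conjTranspose_mul_self, l2_opNorm_conjTranspose,
      pow_two]
  have hquad : y ⬝ᵥ (Rᴴ * R) *ᵥ y = R *ᵥ y ⬝ᵥ R *ᵥ y := by
    simpa using dotProduct_transpose_mul_mul_mulVec 1 R y
  rw [hnorm, hquad, ← mulVec_mulVec]
  exact mulVec_dotProduct_self_le_sq_opNorm_mul Rᴴ (R *ᵥ y)

lemma two_mul_dotProduct_le_add (x z : k → ℝ) {ε : ℝ} (hε : 0 < ε) :
    2 * (x ⬝ᵥ z) ≤ ε * (x ⬝ᵥ x) + ε⁻¹ * (z ⬝ᵥ z) := by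
  simp only [dotProduct, Finset.mul_sum, ← Finset.sum_add_distrib, ← pow_two, ← mul_assoc]
  exact Finset.sum_le_sum fun i _ => two_mul_le_add_mul_sq hε

lemma mul_dotProduct_self_le_of_posSemidef_sub_smul_one [DecidableEq k] {Q : Matrix k k ℝ} {κ : ℝ}
    (hQ : (Q - κ • 1).PosSemidef) (x : k → ℝ) : κ * (x ⬝ᵥ x) ≤ x ⬝ᵥ Q *ᵥ x := by
  have h := dotProduct_mulVec_self_nonneg hQ x
  rwa [sub_mulVec, smul_mulVec, one_mulVec, dotProduct_sub, dotProduct_smul, smul_eq_mul,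
    sub_nonneg] at h

lemma two_mul_dotProduct_mulVec_of_lyapunov {A P Q : Matrix k k ℝ} (hP : P.IsSymm)
    (hLyap : Aᵀ * P + P * A = -Q) (x : k → ℝ) :
    2 * (x ⬝ᵥ P *ᵥ (A *ᵥ x)) = -(x ⬝ᵥ Q *ᵥ x) := by
  have htranspose : x ⬝ᵥ (Aᵀ * P) *ᵥ x = x ⬝ᵥ P *ᵥ (A *ᵥ x) := by
    rw [← mulVec_mulVec, dotProduct_transpose_mulVec, dotProduct_comm,
      dotProduct_mulVec_comm_of_isSymm hP]
  rw [← dotProduct_neg, ← neg_mulVec, ← hLyap, add_mulVec, dotProduct_add, htranspose,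
    mulVec_mulVec, two_mul]

lemma dotProduct_mulVec_mul_mulVec {P : Matrix k k ℝ} {Λ : Matrix l l ℝ} (hP : P.IsSymm)
    (hΛ : Λ.IsSymm) (B : Matrix k l ℝ) (x : k → ℝ) (y : l → ℝ) :
    x ⬝ᵥ P *ᵥ ((B * Λ) *ᵥ y) = y ⬝ᵥ Λ *ᵥ ((Bᵀ * P) *ᵥ x) := by
  rw [mulVec_mulVec, mulVec_mulVec, ← dotProduct_transpose_mulVec]
  simp only [transpose_mul, hP.eq, hΛ.eq, Matrix.mul_assoc]

lemma mulVec_mulVec_dotProduct_self_le {p : Type*} [Fintype p] [DecidableEq l]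
    {Λ : Matrix l l ℝ} (hΛ : Λ.PosSemidef) (M : Matrix k l ℝ) (D : Matrix l p ℝ) (φ : p → ℝ) :
    M *ᵥ (Λ *ᵥ (D *ᵥ φ)) ⬝ᵥ M *ᵥ (Λ *ᵥ (D *ᵥ φ)) ≤
      (‖toEuclideanCLM (𝕜 := ℝ) Λ‖ * ∑ i, ∑ j, M i j ^ 2) *
        ((φ ⬝ᵥ φ) * (Dᵀ * Λ * D).trace) := by
  set F := ∑ i, ∑ j, M i j ^ 2
  set L := ‖toEuclideanCLM (𝕜 := ℝ) Λ‖
  calc M *ᵥ (Λ *ᵥ (D *ᵥ φ)) ⬝ᵥ M *ᵥ (Λ *ᵥ (D *ᵥ φ))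
      ≤ F * (Λ *ᵥ (D *ᵥ φ) ⬝ᵥ Λ *ᵥ (D *ᵥ φ)) := mulVec_dotProduct_self_le_sum_sq_mul _ _
    _ ≤ F * (L * (D *ᵥ φ ⬝ᵥ Λ *ᵥ (D *ᵥ φ))) := by
      gcongr
      exact mulVec_dotProduct_self_le_opNorm_mul hΛ _
    _ ≤ F * (L * ((Dᵀ * Λ * D).trace * (φ ⬝ᵥ φ))) := by
      gcongr
      exact mulVec_dotProduct_mulVec_le_trace_mul hΛ D φ
    _ = (L * F) * ((φ ⬝ᵥ φ) * (Dᵀ * Λ * D).trace) := by ring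

end QuadraticForms

section Derivatives

variable {k l : Type*} [Fintype k] [Fintype l] {s : Set ℝ} {t : ℝ}

lemma hasDerivWithinAt_dotProduct {x y : ℝ → k → ℝ} {x' y' : k → ℝ}
    (hx : HasDerivWithinAt x x' s t) (hy : HasDerivWithinAt y y' s t) :
    HasDerivWithinAt (fun τ => x τ ⬝ᵥ y τ) (x' ⬝ᵥ y t + x t ⬝ᵥ y') s t := by
  rw [hasDerivWithinAt_pi] at hx hy
  simp only [dotProduct, ← Finset.sum_add_distrib]
  exact HasDerivWithinAt.fun_sum fun i _ => (hx i).mul (hy i)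

lemma hasDerivWithinAt_dotProduct_mulVec_self {S : Matrix k k ℝ} (hS : S.IsSymm)
    {x : ℝ → k → ℝ} {x' : k → ℝ} (hx : HasDerivWithinAt x x' s t) :
    HasDerivWithinAt (fun τ => x τ ⬝ᵥ S *ᵥ x τ) (2 * (x t ⬝ᵥ S *ᵥ x')) s t := by
  have hSx : HasDerivWithinAt (fun τ => S *ᵥ x τ) (S *ᵥ x') s t :=
    S.mulVecLin.toContinuousLinearMap.hasFDerivAt.comp_hasDerivWithinAt t hx
  rw [two_mul]
  nth_rewrite 1 [dotProduct_mulVec_comm_of_isSymm hS]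
  exact hasDerivWithinAt_dotProduct hx hSx

lemma hasDerivWithinAt_trace_transpose_mul_mul_self {S : Matrix k k ℝ} (hS : S.IsSymm)
    {X : ℝ → Matrix k l ℝ} {X' : Matrix k l ℝ}
    (hX : ∀ i j, HasDerivWithinAt (fun τ => X τ i j) (X' i j) s t) :
    HasDerivWithinAt (fun τ => ((X τ)ᵀ * S * X τ).trace) (2 * ((X t)ᵀ * S * X').trace) s t := by
  simp only [trace_transpose_mul_mul_eq_sum_col, Finset.mul_sum]
  exact HasDerivWithinAt.fun_sum fun j _ =>
    hasDerivWithinAt_dotProduct_mulVec_self hS (hasDerivWithinAt_pi.mpr fun i => hX i j)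

lemma integral_le_of_hasDerivWithinAt_le_neg {V V' r : ℝ → ℝ} {a b : ℝ} (hab : a ≤ b)
    (hV : ∀ t ∈ Set.Icc a b, HasDerivWithinAt V (V' t) (Set.Icc a b) t)
    (hr : IntegrableOn r (Set.Icc a b)) (hle : ∀ t ∈ Set.Ioo a b, V' t ≤ -r t)
    (hVb : 0 ≤ V b) : ∫ t in a..b, r t ≤ V a := by
  have h := intervalIntegral.integral_le_sub_of_hasDeriv_right_of_le
    (g := fun t => -V t) (g' := fun t => -V' t) hab
    (fun t ht => (hV t ht).neg.continuousWithinAt)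
    (fun t ht => ((hV t (Set.Ioo_subset_Icc_self ht)).hasDerivAt
      (Icc_mem_nhds ht.1 ht.2)).neg.hasDerivWithinAt)
    hr (fun t ht => le_neg_of_le_neg (hle t ht))
  linarith

end Derivatives

section HighOrderTuner

variable {n m N : Type*} [Fintype n] [Fintype m] [Fintype N]

/-- The Lyapunov function `V` of the high-order tuner, as a function of the tracking error `x`,
the parameter error `X = Ξ - Θ` and the tuner mismatch `D = Θ̂ - Ξ`. -/
noncomputable def hotLyapunov (P : Matrix n n ℝ) (Λ : Matrix m m ℝ) (γ : ℝ) (x : n → ℝ)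
    (X D : Matrix m N ℝ) : ℝ :=
  (1 / γ) * (Xᵀ * Λ * X).trace + (1 / γ) * (Dᵀ * Λ * D).trace + x ⬝ᵥ P *ᵥ x

/-- `(e, Θh, Ξ)` solves the high-order-tuner error model on `[0, ∞)` with regressor `Φ`. Derivatives
are taken within `[0, ∞)`, hence are one-sided at `0`, and entrywise for the matrix-valued
functions. -/
structure IsHOTSolution (A : Matrix n n ℝ) (B : Matrix n m ℝ) (P : Matrix n n ℝ)
    (Λ : Matrix m m ℝ) (Θ : Matrix m N ℝ) (γ β μ : ℝ) (Φ : ℝ → N → ℝ) (e : ℝ → n → ℝ)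
    (Θh Ξ : ℝ → Matrix m N ℝ) : Prop where
  hasDerivWithinAt_error : ∀ t ∈ Set.Ici (0 : ℝ),
    HasDerivWithinAt e (A *ᵥ e t + (B * Λ * (Θh t - Θ)) *ᵥ Φ t) (Set.Ici 0) t
  hasDerivWithinAt_tuner : ∀ t ∈ Set.Ici (0 : ℝ), ∀ i j,
    HasDerivWithinAt (fun s => Ξ s i j) (-γ * (((Bᵀ * P) *ᵥ e t) i * Φ t j)) (Set.Ici 0) t
  hasDerivWithinAt_estimate : ∀ t ∈ Set.Ici (0 : ℝ), ∀ i j,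
    HasDerivWithinAt (fun s => Θh s i j)
      (-β * (Θh t i j - Ξ t i j) * (1 + μ * (Φ t ⬝ᵥ Φ t))) (Set.Ici 0) t

/-- The derivative of the Lyapunov function along the error model, at tracking error `x`, tuner
mismatch `D` and regressor `φ`; it does not depend on the parameter error `Ξ - Θ`. -/
noncomputable def hotLyapunovRate (B : Matrix n m ℝ) (Q P : Matrix n n ℝ) (Λ : Matrix m m ℝ)
    (γ β μ : ℝ) (x : n → ℝ) (D : Matrix m N ℝ) (φ : N → ℝ) : ℝ :=
  -(x ⬝ᵥ Q *ᵥ x) + 4 * (D *ᵥ φ ⬝ᵥ Λ *ᵥ ((Bᵀ * P) *ᵥ x)) -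
    2 * β / γ * (1 + μ * (φ ⬝ᵥ φ)) * (Dᵀ * Λ * D).trace

variable {A Q P : Matrix n n ℝ} {B : Matrix n m ℝ} {Λ : Matrix m m ℝ} {Θ : Matrix m N ℝ}
  {γ β μ κ : ℝ} {Φ : ℝ → N → ℝ} {e : ℝ → n → ℝ} {Θh Ξ : ℝ → Matrix m N ℝ}

lemma hotLyapunov_nonneg (hP : P.PosSemidef) (hΛ : Λ.PosSemidef) (hγ : 0 < γ) (x : n → ℝ)
    (X D : Matrix m N ℝ) : 0 ≤ hotLyapunov P Λ γ x X D := by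
  have hX := (posSemidef_transpose_mul_mul_same hΛ X).trace_nonneg
  have hD := (posSemidef_transpose_mul_mul_same hΛ D).trace_nonneg
  have hx := dotProduct_mulVec_self_nonneg hP x
  unfold hotLyapunov
  positivity

lemma hasDerivWithinAt_hotLyapunov (hP : P.IsSymm) (hΛ : Λ.IsSymm) {s : Set ℝ} {t : ℝ}
    {x : ℝ → n → ℝ} {x' : n → ℝ} {X D : ℝ → Matrix m N ℝ} {X' D' : Matrix m N ℝ}
    (hx : HasDerivWithinAt x x' s t)
    (hX : ∀ i j, HasDerivWithinAt (fun τ => X τ i j) (X' i j) s t)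
    (hD : ∀ i j, HasDerivWithinAt (fun τ => D τ i j) (D' i j) s t) :
    HasDerivWithinAt (fun τ => hotLyapunov P Λ γ (x τ) (X τ) (D τ))
      ((1 / γ) * (2 * ((X t)ᵀ * Λ * X').trace) + (1 / γ) * (2 * ((D t)ᵀ * Λ * D').trace) +
        2 * (x t ⬝ᵥ P *ᵥ x')) s t :=
  (((hasDerivWithinAt_trace_transpose_mul_mul_self hΛ hX).const_mul _).add
    ((hasDerivWithinAt_trace_transpose_mul_mul_self hΛ hD).const_mul _)).add
    (hasDerivWithinAt_dotProduct_mulVec_self hP hx)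

lemma hotLyapunovRate_eq (hP : P.IsSymm) (hΛ : Λ.IsSymm) (hLyap : Aᵀ * P + P * A = -Q)
    (hγ : γ ≠ 0) (x : n → ℝ) (X D : Matrix m N ℝ) (φ : N → ℝ) :
    (1 / γ) * (2 * (Xᵀ * Λ * (-γ • vecMulVec ((Bᵀ * P) *ᵥ x) φ)).trace) +
      (1 / γ) * (2 * (Dᵀ * Λ * (-(β * (1 + μ * (φ ⬝ᵥ φ))) • D +
        γ • vecMulVec ((Bᵀ * P) *ᵥ x) φ)).trace) +
      2 * (x ⬝ᵥ P *ᵥ (A *ᵥ x + (B * Λ * (X + D)) *ᵥ φ)) =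
    hotLyapunovRate B Q P Λ γ β μ x D φ := by
  have herror : 2 * (x ⬝ᵥ P *ᵥ (A *ᵥ x + (B * Λ * (X + D)) *ᵥ φ)) =
      -(x ⬝ᵥ Q *ᵥ x) + 2 * (X *ᵥ φ ⬝ᵥ Λ *ᵥ ((Bᵀ * P) *ᵥ x)) +
        2 * (D *ᵥ φ ⬝ᵥ Λ *ᵥ ((Bᵀ * P) *ᵥ x)) := by
    rw [mulVec_add, dotProduct_add, mul_add, two_mul_dotProduct_mulVec_of_lyapunov hP hLyap,
      ← mulVec_mulVec, dotProduct_mulVec_mul_mulVec hP hΛ, add_mulVec, add_dotProduct]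
    ring
  rw [herror]
  simp only [Matrix.mul_add, Matrix.mul_smul, trace_add, trace_smul, smul_eq_mul,
    trace_transpose_mul_mul_vecMulVec, hotLyapunovRate]
  field_simp
  ring

lemma hasDerivWithinAt_hotLyapunov_of_isHOTSolution (hP : P.IsSymm) (hΛ : Λ.IsSymm)
    (hLyap : Aᵀ * P + P * A = -Q) (hγ : γ ≠ 0)
    (hsol : IsHOTSolution A B P Λ Θ γ β μ Φ e Θh Ξ) {t : ℝ} (ht : t ∈ Set.Ici (0 : ℝ)) :
    HasDerivWithinAt (fun τ => hotLyapunov P Λ γ (e τ) (Ξ τ - Θ) (Θh τ - Ξ τ))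
      (hotLyapunovRate B Q P Λ γ β μ (e t) (Θh t - Ξ t) (Φ t)) (Set.Ici 0) t := by
  have hX (i j) := (hsol.hasDerivWithinAt_tuner t ht i j).sub_const (Θ i j)
  have hD (i j) :=
    (hsol.hasDerivWithinAt_estimate t ht i j).sub (hsol.hasDerivWithinAt_tuner t ht i j)
  rw [← hotLyapunovRate_eq hP hΛ hLyap hγ (e t) (Ξ t - Θ), add_comm (Ξ t - Θ),
    sub_add_sub_cancel]
  refine hasDerivWithinAt_hotLyapunov hP hΛ (hsol.hasDerivWithinAt_error t ht)
    (fun i j => (hX i j).congr_deriv ?_) (fun i j => (hD i j).congr_deriv ?_)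
  · simp [vecMulVec_apply]
  · simp only [Matrix.add_apply, Matrix.smul_apply, Matrix.sub_apply, vecMulVec_apply, smul_eq_mul]
    ring

variable [DecidableEq n] [DecidableEq m]

lemma hotLyapunovRate_le (hP : P.IsSymm) (hΛ : Λ.PosSemidef) (hγ : 0 < γ) (hβ : 0 < β)
    (hκ : 0 < κ) (hQ : (Q - κ • 1).PosSemidef)
    (hμ : 4 * γ / (κ * β) *
      (‖toEuclideanCLM (𝕜 := ℝ) Λ‖ * ∑ i, ∑ j, ((P * B) i j) ^ 2) ≤ μ)
    (x : n → ℝ) (D : Matrix m N ℝ) (φ : N → ℝ) :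
    hotLyapunovRate B Q P Λ γ β μ x D φ ≤ -(1 / 2 * (x ⬝ᵥ Q *ᵥ x)) := by
  set z := (P * B) *ᵥ (Λ *ᵥ (D *ᵥ φ)) with hz
  set G := ‖toEuclideanCLM (𝕜 := ℝ) Λ‖ * ∑ i, ∑ j, ((P * B) i j) ^ 2
  set τ := (Dᵀ * Λ * D).trace with hτ
  have hτ_nonneg : 0 ≤ τ := (posSemidef_transpose_mul_mul_same hΛ D).trace_nonneg
  have hφ_nonneg : 0 ≤ φ ⬝ᵥ φ := by simpa using dotProduct_self_star_nonneg φ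
  have hcross : D *ᵥ φ ⬝ᵥ Λ *ᵥ ((Bᵀ * P) *ᵥ x) = x ⬝ᵥ z := by
    rw [hz, ← dotProduct_mulVec_mul_mulVec hP (isHermitian_iff_isSymm.mp hΛ.isHermitian)]
    simp only [mulVec_mulVec, Matrix.mul_assoc]
  have hyoung : 4 * (x ⬝ᵥ z) ≤ κ / 2 * (x ⬝ᵥ x) + 8 / κ * (z ⬝ᵥ z) := by
    have h := two_mul_dotProduct_le_add x z (ε := κ / 4) (by positivity)
    rw [inv_div] at h
    linear_combination 2 * h
  have hdamping : 8 / κ * (z ⬝ᵥ z) ≤ 2 * β / γ * μ * ((φ ⬝ᵥ φ) * τ) :=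
    calc 8 / κ * (z ⬝ᵥ z) ≤ 8 / κ * (G * ((φ ⬝ᵥ φ) * τ)) := by
          gcongr
          exact mulVec_mulVec_dotProduct_self_le hΛ (P * B) D φ
      _ = 2 * β / γ * (4 * γ / (κ * β) * G) * ((φ ⬝ᵥ φ) * τ) := by
          field_simp
          ring
      _ ≤ 2 * β / γ * μ * ((φ ⬝ᵥ φ) * τ) := by gcongr
  have hcoercive := mul_dotProduct_self_le_of_posSemidef_sub_smul_one hQ x
  have hleak : 0 ≤ 2 * β / γ * τ := by positivity
  rw [hotLyapunovRate, hcross, ← hτ]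
  linarith

theorem hot_constant_regret_general (hP : P.PosSemidef) (hΛ : Λ.PosSemidef)
    (hLyap : Aᵀ * P + P * A = -Q) (hκ : 0 < κ) (hQ : (Q - κ • 1).PosSemidef)
    (hγ : 0 < γ) (hβ : 0 < β)
    (hμ : 4 * γ / (κ * β) *
      (‖toEuclideanCLM (𝕜 := ℝ) Λ‖ * ∑ i, ∑ j, ((P * B) i j) ^ 2) ≤ μ)
    (hsol : IsHOTSolution A B P Λ Θ γ β μ Φ e Θh Ξ) {T : ℝ} (hT : 0 ≤ T) :
    ∫ τ in (0 : ℝ)..T, e τ ⬝ᵥ Q *ᵥ e τ ≤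
      2 * hotLyapunov P Λ γ (e 0) (Ξ 0 - Θ) (Θh 0 - Ξ 0) := by
  have hP_symm := isHermitian_iff_isSymm.mp hP.isHermitian
  have hΛ_symm := isHermitian_iff_isSymm.mp hΛ.isHermitian
  have he : ContinuousOn e (Set.Icc 0 T) := fun t ht =>
    (hsol.hasDerivWithinAt_error t ht.1).continuousWithinAt.mono Set.Icc_subset_Ici_self
  have hcont : ContinuousOn (fun τ => 1 / 2 * (e τ ⬝ᵥ Q *ᵥ e τ)) (Set.Icc 0 T) :=
    (by fun_prop : Continuous fun x : n → ℝ => 1 / 2 * (x ⬝ᵥ Q *ᵥ x)).comp_continuousOn he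
  have hregret := integral_le_of_hasDerivWithinAt_le_neg hT
    (fun t ht => (hasDerivWithinAt_hotLyapunov_of_isHOTSolution hP_symm hΛ_symm
      hLyap hγ.ne' hsol ht.1).mono Set.Icc_subset_Ici_self)
    hcont.integrableOn_Icc
    (fun t _ => hotLyapunovRate_le hP_symm hΛ hγ hβ hκ hQ hμ _ _ _)
    (hotLyapunov_nonneg hP hΛ hγ _ _ _)
  rw [intervalIntegral.integral_const_mul] at hregret
  linarith

end HighOrderTuner

/-- Theorem 4, constant regret. Along any solution of the
high-order-tuner error model, the regret `R(T) = ∫_0^T eᵀQe` satisfies `R(T) ≤ 2V(0)`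
for every `T > 0`, where `V` is the high-order-tuner Lyapunov function; in particular
the regret is bounded independently of `T`. -/
theorem hot_constant_regret
    (n m N : ℕ)
    (AH : Matrix (Fin n) (Fin n) ℝ) (B : Matrix (Fin n) (Fin m) ℝ)
    (Q P : Matrix (Fin n) (Fin n) ℝ)
    (hQ : Q.PosDef) (hP : P.PosDef)
    (hLyap : AHᵀ * P + P * AH = -Q)
    (hQ2 : (Q - (2 : ℝ) • 1).PosSemidef)
    (Λ : Matrix (Fin m) (Fin m) ℝ) (hΛ : Λ.PosDef)
    (hΛnorm : ‖Matrix.toEuclideanCLM (𝕜 := ℝ) Λ‖ ≤ 1)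
    (Θ : Matrix (Fin m) (Fin N) ℝ)
    (γ β μ : ℝ) (hγ : 0 < γ) (hβ : 0 < β)
    (hμ : (2 * γ / β) * ∑ i, ∑ j, ((P * B) i j) ^ 2 ≤ μ)
    (Φ : ℝ → Fin N → ℝ) (hΦ : ContinuousOn Φ (Set.Ici 0))
    (e : ℝ → Fin n → ℝ) (Θh Ξ : ℝ → Matrix (Fin m) (Fin N) ℝ)
    (he : ∀ t ∈ Set.Ici (0 : ℝ),
      HasDerivAt e (AH.mulVec (e t) + (B * Λ * (Θh t - Θ)).mulVec (Φ t)) t)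
    (hΞ : ∀ t ∈ Set.Ici (0 : ℝ), ∀ i j,
      HasDerivAt (fun s => Ξ s i j) (-γ * ((Bᵀ * P).mulVec (e t) i * Φ t j)) t)
    (hΘh : ∀ t ∈ Set.Ici (0 : ℝ), ∀ i j,
      HasDerivAt (fun s => Θh s i j)
        (-β * (Θh t i j - Ξ t i j) * (1 + μ * (Φ t ⬝ᵥ Φ t))) t) :
    ∀ T > (0 : ℝ),
      (∫ τ in (0 : ℝ)..T, e τ ⬝ᵥ Q.mulVec (e τ)) ≤
        2 * ((1 / γ) * ((Ξ 0 - Θ)ᵀ * Λ * (Ξ 0 - Θ)).trace +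
          (1 / γ) * ((Θh 0 - Ξ 0)ᵀ * Λ * (Θh 0 - Ξ 0)).trace +
          e 0 ⬝ᵥ P.mulVec (e 0)) := by
  have hμ' : 4 * γ / (2 * β) *
      (‖toEuclideanCLM (𝕜 := ℝ) Λ‖ * ∑ i, ∑ j, ((P * B) i j) ^ 2) ≤ μ := by
    refine le_trans ?_ hμ
    rw [show 4 * γ / (2 * β) = 2 * γ / β by field_simp; ring]
    gcongr
    exact mul_le_of_le_one_left (by positivity) hΛnorm
  intro T hT
  exact hot_constant_regret_general hP.posSemidef hΛ.posSemidef hLyap two_pos hQ2 hγ hβ hμ'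
    ⟨fun t ht => (he t ht).hasDerivWithinAt, fun t ht i j => (hΞ t ht i j).hasDerivWithinAt,
      fun t ht i j => (hΘh t ht i j).hasDerivWithinAt⟩ hT.le
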